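/- arXiv:1908.01223 — 4 statements merged into one kernel-verified Lean document; each statement's English description precedes it below -/
import Mathlib

section
/- A graph G is P4-sparse if and only if G contains no induced subgraph isomorphic to any of the following seven graphs: P5 (the path on five vertices); C5 (the cycle on five vertices); the complement of P5; the pan (the graph obtained from a cycle on four vertices by adding a pendant vertex adjacent to exactly one cycle vertex); the complement of the pan; the fork (the tree on five vertices obtained from the star K_{1,3} by subdividing one edge, i.e., the tree with degree sequence 3,2,1,1,1); and the kite (the complement of the fork). -/
open SimpleGraph

variable {V : Type*}

/-- `a, b, c, d` form an induced path on four vertices (a `P4`) in `G`. -/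
def IsP4 (G : SimpleGraph V) (a b c d : V) : Prop :=
  a ≠ b ∧ a ≠ c ∧ a ≠ d ∧ b ≠ c ∧ b ≠ d ∧ c ≠ d ∧
    G.Adj a b ∧ G.Adj b c ∧ G.Adj c d ∧ ¬G.Adj a c ∧ ¬G.Adj a d ∧ ¬G.Adj b d

/-- A graph is a cograph if it contains no induced `P4`. -/
def IsCograph (G : SimpleGraph V) : Prop :=
  ∀ a b c d : V, ¬IsP4 G a b c d

/-- The vertex set `A` induces a `P4` in `G`. -/
def InducesP4 (G : SimpleGraph V) (A : Set V) : Prop :=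
  ∃ a b c d : V, IsP4 G a b c d ∧ A = {a, b, c, d}

/-- `G` is `P4`-sparse: every set of five vertices induces at most one `P4`. -/
def P4Sparse (G : SimpleGraph V) : Prop :=
  ∀ s : Set V, s.ncard = 5 →
    ∀ A B : Set V, A ⊆ s → B ⊆ s → InducesP4 G A → InducesP4 G B → A = B

/-- `F` is a deletion set of `G`: a set of edges of `G` whose removal yields a cograph. -/
def IsDeletionSet (G : SimpleGraph V) (F : Set (Sym2 V)) : Prop :=
  F ⊆ G.edgeSet ∧ IsCograph (G.deleteEdges F)

/-- The minimum size of a deletion set of `G`. -/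
noncomputable def cographAlpha (G : SimpleGraph V) : ℕ :=
  sInf {n | ∃ F : Set (Sym2 V), IsDeletionSet G F ∧ F.ncard = n}

/-- The path on five vertices. -/
def p5 : SimpleGraph (Fin 5) :=
  SimpleGraph.fromEdgeSet {s(0, 1), s(1, 2), s(2, 3), s(3, 4)}

/-- The cycle on five vertices. -/
def c5 : SimpleGraph (Fin 5) :=
  SimpleGraph.fromEdgeSet {s(0, 1), s(1, 2), s(2, 3), s(3, 4), s(4, 0)}

/-- The pan: a four-cycle `0 1 2 3` together with a pendant vertex `4` adjacent to `0`. -/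
def pan : SimpleGraph (Fin 5) :=
  SimpleGraph.fromEdgeSet {s(0, 1), s(1, 2), s(2, 3), s(3, 0), s(4, 0)}

/-- The fork: the tree obtained from the star `K_{1,3}` (centered at `1`) by subdividing
one edge; it has degree sequence `3,2,1,1,1`. -/
def fork : SimpleGraph (Fin 5) :=
  SimpleGraph.fromEdgeSet {s(0, 1), s(1, 2), s(1, 3), s(3, 4)}

/-- The reversal of an induced path is an induced path. -/
lemma IsP4.reverse {G : SimpleGraph V} {a b c d : V} (h : IsP4 G a b c d) :
    IsP4 G d c b a := by
  obtain ⟨h1, h2, h3, h4, h5, h6, h7, h8, h9, h10, h11, h12⟩ := h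
  exact ⟨h6.symm, h5.symm, h3.symm, h4.symm, h2.symm, h1.symm, h9.symm, h8.symm, h7.symm,
    fun h => h12 h.symm, fun h => h11 h.symm, fun h => h10 h.symm⟩

/-- The complement of a `P4` is again a `P4`. -/
lemma IsP4.compl {G : SimpleGraph V} {a b c d : V} (h : IsP4 G a b c d) :
    IsP4 Gᶜ b d a c := by
  simp only [IsP4, compl_adj] at h ⊢
  grind [SimpleGraph.adj_comm]

lemma IsP4.map {W : Type*} {H : SimpleGraph W} {G : SimpleGraph V} (f : H ↪g G)
    {a b c d : W} (h : IsP4 H a b c d) : IsP4 G (f a) (f b) (f c) (f d) := by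
  simpa only [IsP4, ne_eq, f.injective.eq_iff, f.map_adj_iff] using h

lemma IsP4.ncard {G : SimpleGraph V} {a b c d : V} (h : IsP4 G a b c d) :
    ({a, b, c, d} : Set V).ncard = 4 := by
  obtain ⟨h1, h2, h3, h4, h5, h6, -⟩ := h
  rw [Set.ncard_eq_succ]
  refine ⟨a, {b, c, d}, by simp [h1, h2, h3], rfl, ?_⟩
  rw [Set.ncard_eq_three]
  exact ⟨b, c, d, h4, h5, h6, rfl⟩

/-- A `P4`-sparse graph has no induced five-vertex subgraph with two distinct `P4`s. -/
lemma P4Sparse.isEmpty_embedding {H : SimpleGraph (Fin 5)} {G : SimpleGraph V}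
    (hG : P4Sparse G) {a b c d a' b' c' d' x : Fin 5}
    (h : IsP4 H a b c d) (h' : IsP4 H a' b' c' d')
    (hx : x ∈ ({a, b, c, d} : Finset (Fin 5))) (hx' : x ∉ ({a', b', c', d'} : Finset (Fin 5))) :
    IsEmpty (H ↪g G) := by
  refine ⟨fun f => ?_⟩
  have hcard : (Set.range f).ncard = 5 := by
    rw [← Set.image_univ, Set.ncard_image_of_injective _ f.injective]
    simp
  have heq := hG (Set.range f) hcard _ _ (by simp [Set.insert_subset_iff])
    (by simp [Set.insert_subset_iff]) ⟨_, _, _, _, h.map f, rfl⟩ ⟨_, _, _, _, h'.map f, rfl⟩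
  have hfx : f x ∈ ({f a, f b, f c, f d} : Set V) := by
    simpa [f.injective.eq_iff] using hx
  rw [heq] at hfx
  exact hx' (by simpa [f.injective.eq_iff] using hfx)

/-- Vertices whose pairwise adjacencies match those of `H` embed `H` in `G`. -/
lemma nonempty_embedding_of_forall_lt {n : ℕ} {H : SimpleGraph (Fin n)} {G : SimpleGraph V}
    (v : Fin n → V)
    (h : ∀ i j, i < j → v i ≠ v j ∧ (G.Adj (v i) (v j) ↔ H.Adj i j)) :
    Nonempty (H ↪g G) := by
  refine ⟨⟨⟨v, fun i j hij => ?_⟩, fun {i j} => ?_⟩⟩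
  · rcases lt_trichotomy i j with hlt | heq | hlt
    · exact absurd hij (h i j hlt).1
    · exact heq
    · exact absurd hij.symm (h j i hlt).1
  · change G.Adj (v i) (v j) ↔ H.Adj i j
    rcases lt_trichotomy i j with hlt | rfl | hlt
    · exact (h i j hlt).2
    · simp
    · rw [G.adj_comm, H.adj_comm]
      exact (h j i hlt).2

/-- In a graph without the seven forbidden subgraphs, a vertex outside a `P4` that sees its first
vertex sees its last one, and similarly for the midpoints. -/
lemma IsP4.adj_imp_of_forbidden {G : SimpleGraph V}
    (hG : IsEmpty (p5 ↪g G) ∧ IsEmpty (c5 ↪g G) ∧ IsEmpty (p5ᶜ ↪g G) ∧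
      IsEmpty (pan ↪g G) ∧ IsEmpty (panᶜ ↪g G) ∧
      IsEmpty (fork ↪g G) ∧ IsEmpty (forkᶜ ↪g G))
    {a b c d e : V} (h : IsP4 G a b c d) (he : e ∉ ({a, b, c, d} : Set V)) :
    (G.Adj e a → G.Adj e d) ∧ (G.Adj e b → G.Adj e c) ∧ (G.Adj e a → G.Adj e b ∨ G.Adj e c) := by
  obtain ⟨hp5, hc5, hp5c, hpan, hpanc, hfork, hforkc⟩ := hG
  simp only [Set.mem_insert_iff, Set.mem_singleton_iff, not_or] at he
  obtain ⟨hea, heb, hec, hed⟩ := he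
  obtain ⟨h1, h2, h3, h4, h5, h6, h7, h8, h9, h10, h11, h12⟩ := h
  obtain ⟨_, _, _, _, _, _, _, _, _, _, _, _⟩ :=
    IsP4.reverse ⟨h1, h2, h3, h4, h5, h6, h7, h8, h9, h10, h11, h12⟩
  have hae := Ne.symm hea
  have hbe := Ne.symm heb
  have hce := Ne.symm hec
  have hde := Ne.symm hed
  have ca := G.adj_comm a e
  have cb := G.adj_comm b e
  have cc := G.adj_comm c e
  have cd := G.adj_comm d e
  refine ⟨fun ea => by_contra fun ed => ?_, fun eb => by_contra fun ec => ?_,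
    fun ea => by_contra fun hbc => ?_⟩
  · by_cases eb : G.Adj e b <;> by_cases ec : G.Adj e c <;>
      simp only [ea, eb, ec, ed, iff_true, iff_false] at ca cb cc cd
    · exact absurd (nonempty_embedding_of_forall_lt ![b, d, e, a, c]
        (by simp [Fin.forall_fin_succ, fork, *])) (not_nonempty_iff.2 hforkc)
    · exact absurd (nonempty_embedding_of_forall_lt ![d, a, c, e, b]
        (by simp [Fin.forall_fin_succ, pan, *])) (not_nonempty_iff.2 hpanc)
    · exact absurd (nonempty_embedding_of_forall_lt ![c, b, a, e, d]
        (by simp [Fin.forall_fin_succ, pan, *])) (not_nonempty_iff.2 hpan)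
    · exact absurd (nonempty_embedding_of_forall_lt ![e, a, b, c, d]
        (by simp [Fin.forall_fin_succ, p5, *])) (not_nonempty_iff.2 hp5)
  · by_cases ea : G.Adj e a <;> by_cases ed : G.Adj e d <;>
      simp only [ea, eb, ec, ed, iff_true, iff_false] at ca cb cc cd
    · exact absurd (nonempty_embedding_of_forall_lt ![e, c, a, d, b]
        (by simp [Fin.forall_fin_succ, p5, *])) (not_nonempty_iff.2 hp5c)
    · exact absurd (nonempty_embedding_of_forall_lt ![d, a, c, e, b]
        (by simp [Fin.forall_fin_succ, pan, *])) (not_nonempty_iff.2 hpanc)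
    · exact absurd (nonempty_embedding_of_forall_lt ![b, c, d, e, a]
        (by simp [Fin.forall_fin_succ, pan, *])) (not_nonempty_iff.2 hpan)
    · exact absurd (nonempty_embedding_of_forall_lt ![a, b, e, c, d]
        (by simp [Fin.forall_fin_succ, fork, *])) (not_nonempty_iff.2 hfork)
  · obtain ⟨eb, ec⟩ := not_or.1 hbc
    by_cases ed : G.Adj e d <;>
      simp only [ea, eb, ec, ed, iff_true, iff_false] at ca cb cc cd
    · exact absurd (nonempty_embedding_of_forall_lt ![a, b, c, d, e]
        (by simp [Fin.forall_fin_succ, c5, *])) (not_nonempty_iff.2 hc5)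
    · exact absurd (nonempty_embedding_of_forall_lt ![e, a, b, c, d]
        (by simp [Fin.forall_fin_succ, p5, *])) (not_nonempty_iff.2 hp5)

/-- In a graph without the seven forbidden subgraphs, a vertex outside a `P4` sees none of it,
all of it, or exactly its two midpoints. -/
lemma IsP4.adj_of_forbidden {G : SimpleGraph V}
    (hG : IsEmpty (p5 ↪g G) ∧ IsEmpty (c5 ↪g G) ∧ IsEmpty (p5ᶜ ↪g G) ∧
      IsEmpty (pan ↪g G) ∧ IsEmpty (panᶜ ↪g G) ∧
      IsEmpty (fork ↪g G) ∧ IsEmpty (forkᶜ ↪g G))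
    {a b c d e : V} (h : IsP4 G a b c d) (he : e ∉ ({a, b, c, d} : Set V)) :
    (G.Adj e b ↔ G.Adj e c) ∧ (G.Adj e a ↔ G.Adj e d) ∧ (G.Adj e a → G.Adj e b) := by
  have hleft := h.adj_imp_of_forbidden hG he
  have hright := h.reverse.adj_imp_of_forbidden hG (e := e) (by
    simp only [Set.mem_insert_iff, Set.mem_singleton_iff] at he ⊢
    tauto)
  tauto

/-- A vertex seeing none of a `P4`, all of it, or exactly its midpoints lies in no `P4` of the
resulting five-vertex graph. -/
lemma IsP4.not_isP4_of_adj {G : SimpleGraph V} {a b c d e : V} (h : IsP4 G a b c d)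
    (hadj : (G.Adj e b ↔ G.Adj e c) ∧ (G.Adj e a ↔ G.Adj e d) ∧ (G.Adj e a → G.Adj e b))
    {x y z w : V} (hx : x ∈ ({a, b, c, d, e} : Set V)) (hy : y ∈ ({a, b, c, d, e} : Set V))
    (hz : z ∈ ({a, b, c, d, e} : Set V)) (hw : w ∈ ({a, b, c, d, e} : Set V))
    (he : e = x ∨ e = y) : ¬IsP4 G x y z w := by
  simp only [IsP4, Set.mem_insert_iff, Set.mem_singleton_iff] at *
  grind [SimpleGraph.adj_comm]

/-- A graph `G` is `P4`-sparse if and only if it contains no induced subgraph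
isomorphic to `P5`, `C5`, the complement of `P5`, the pan, the complement of the pan,
the fork, or the kite (the complement of the fork). -/
theorem p4Sparse_iff_forbidden (G : SimpleGraph V) :
    P4Sparse G ↔
      IsEmpty (p5 ↪g G) ∧ IsEmpty (c5 ↪g G) ∧ IsEmpty (p5ᶜ ↪g G) ∧
      IsEmpty (pan ↪g G) ∧ IsEmpty (panᶜ ↪g G) ∧
      IsEmpty (fork ↪g G) ∧ IsEmpty (forkᶜ ↪g G) := by
  constructor
  · intro hG
    have p5_left : IsP4 p5 0 1 2 3 := by simp [IsP4, p5]
    have p5_right : IsP4 p5 1 2 3 4 := by simp [IsP4, p5]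
    have c5_left : IsP4 c5 0 1 2 3 := by simp [IsP4, c5]
    have c5_right : IsP4 c5 1 2 3 4 := by simp [IsP4, c5]
    have pan_left : IsP4 pan 4 0 1 2 := by simp [IsP4, pan]
    have pan_right : IsP4 pan 4 0 3 2 := by simp [IsP4, pan]
    have fork_left : IsP4 fork 0 1 3 4 := by simp [IsP4, fork]
    have fork_right : IsP4 fork 2 1 3 4 := by simp [IsP4, fork]
    exact ⟨hG.isEmpty_embedding (x := 0) p5_left p5_right (by decide) (by decide),
      hG.isEmpty_embedding (x := 0) c5_left c5_right (by decide) (by decide),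
      hG.isEmpty_embedding (x := 0) p5_left.compl p5_right.compl (by decide) (by decide),
      hG.isEmpty_embedding (x := 1) pan_left pan_right (by decide) (by decide),
      hG.isEmpty_embedding (x := 1) pan_left.compl pan_right.compl (by decide) (by decide),
      hG.isEmpty_embedding (x := 0) fork_left fork_right (by decide) (by decide),
      hG.isEmpty_embedding (x := 0) fork_left.compl fork_right.compl (by decide) (by decide)⟩
  · rintro hG s hs A B hA hB ⟨a, b, c, d, h, rfl⟩ ⟨x, y, z, w, h', rfl⟩
    by_contra hne
    have hnot : ¬({x, y, z, w} : Set V) ⊆ {a, b, c, d} := fun hsub =>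
      hne (Set.eq_of_subset_of_ncard_le hsub (by rw [h.ncard, h'.ncard])).symm
    obtain ⟨e, he, he'⟩ := Set.not_subset.mp hnot
    have hadj := h.adj_of_forbidden hG he'
    have hcard : ({a, b, c, d, e} : Set V).ncard = 5 := by
      rw [show ({a, b, c, d, e} : Set V) = insert e {a, b, c, d} by ext; simp; tauto,
        Set.ncard_insert_of_notMem he', h.ncard]
    have hsub : ({a, b, c, d, e} : Set V) ⊆ s := by
      have := hB he
      simp only [Set.insert_subset_iff, Set.singleton_subset_iff] at hA ⊢
      tauto
    have heq := Set.eq_of_subset_of_ncard_le hsub (by rw [hcard, hs])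
      (Set.finite_of_ncard_ne_zero (by omega))
    subst heq
    have hx := hB (show x ∈ _ by simp)
    have hy := hB (show y ∈ _ by simp)
    have hz := hB (show z ∈ _ by simp)
    have hw := hB (show w ∈ _ by simp)
    simp only [Set.mem_insert_iff, Set.mem_singleton_iff] at he
    rcases he with he | he | he | he
    · exact h.not_isP4_of_adj hadj hx hy hz hw (.inl he) h'
    · exact h.not_isP4_of_adj hadj hx hy hz hw (.inr he) h'
    · exact h.not_isP4_of_adj hadj hw hz hy hx (.inr he) h'.reverse
    · exact h.not_isP4_of_adj hadj hw hz hy hx (.inl he) h'.reverse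
end

section
/- Let G be a spider with vertex partition S, K, R as in the definition of a spider. Then alpha(G[S ∪ K]) equals either |K| - 1 or |K|(|K|-1)/2. -/
open SimpleGraph

variable {V : Type*}

/-- `S, K, R` is a spider partition of the vertices of `G`. -/
def IsSpiderPartition (G : SimpleGraph V) (S K R : Set V) : Prop :=
  S ∪ K ∪ R = Set.univ ∧ Disjoint S K ∧ Disjoint S R ∧ Disjoint K R ∧
  S.ncard = K.ncard ∧ 2 ≤ K.ncard ∧
  (∀ u ∈ S, ∀ v ∈ S, u ≠ v → ¬G.Adj u v) ∧
  (∀ u ∈ K, ∀ v ∈ K, u ≠ v → G.Adj u v) ∧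
  (∀ r ∈ R, ∀ k ∈ K, G.Adj r k) ∧
  (∀ r ∈ R, ∀ s ∈ S, ¬G.Adj r s) ∧
  ∃ φ : S ≃ K,
    (∀ s : S, G.neighborSet s ∩ K = {(φ s : V)}) ∨
    (∀ s : S, G.neighborSet s ∩ K = K \ {(φ s : V)})

/-- `G` is a spider. -/
def IsSpider (G : SimpleGraph V) : Prop :=
  ∃ S K R : Set V, IsSpiderPartition G S K R

section SplitGraph

variable {ι : Type*}

/-- The split graph on two copies of `ι`: the left copy is independent, the right copy is a clique,
and the left vertex `i` is joined to the right vertex `j` when `r i j`. -/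
def splitGraph (r : ι → ι → Prop) : SimpleGraph (ι ⊕ ι) where
  Adj
    | .inl _, .inl _ => False
    | .inl i, .inr j => r i j
    | .inr j, .inl i => r i j
    | .inr i, .inr j => i ≠ j
  symm := ⟨by rintro (i | i) (j | j) h <;> first | exact h | exact h.symm⟩
  loopless := ⟨by rintro (i | i) h <;> simp at h⟩

@[simp] theorem splitGraph_inl_inl (r : ι → ι → Prop) (i j : ι) :
    ¬(splitGraph r).Adj (.inl i) (.inl j) := id

@[simp] theorem splitGraph_inl_inr (r : ι → ι → Prop) (i j : ι) :
    (splitGraph r).Adj (.inl i) (.inr j) ↔ r i j := Iff.rfl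

@[simp] theorem splitGraph_inr_inl (r : ι → ι → Prop) (i j : ι) :
    (splitGraph r).Adj (.inr j) (.inl i) ↔ r i j := Iff.rfl

@[simp] theorem splitGraph_inr_inr (r : ι → ι → Prop) (i j : ι) :
    (splitGraph r).Adj (.inr i) (.inr j) ↔ i ≠ j := Iff.rfl

/-- A split graph whose left neighbourhoods are nested is a cograph. -/
theorem isCograph_splitGraph {r : ι → ι → Prop}
    (hr : ∀ i j a b, r i a → r j b → r i b ∨ r j a) : IsCograph (splitGraph r) := by
  rintro (a | a) (b | b) (c | c) (d | d) ⟨-, hac, had, -, hbd, -, h1, h2, h3, h4, h5, h6⟩ <;>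
    simp at * <;> grind

theorem cographAlpha_le {G : SimpleGraph V} {F : Set (Sym2 V)} (hF : IsDeletionSet G F) :
    cographAlpha G ≤ F.ncard :=
  Nat.sInf_le ⟨F, hF, rfl⟩

theorem le_cographAlpha {G : SimpleGraph V} {n : ℕ}
    (h : ∀ F, IsDeletionSet G F → n ≤ F.ncard) : n ≤ cographAlpha G := by
  have hne : {n | ∃ F : Set (Sym2 V), IsDeletionSet G F ∧ F.ncard = n}.Nonempty :=
    ⟨_, G.edgeSet, ⟨subset_rfl, fun a b c d hP => by
      have := hP.2.2.2.2.2.2.1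
      simp at this⟩, rfl⟩
  obtain ⟨F, hF, hn⟩ := Nat.sInf_mem hne
  exact (h F hF).trans_eq hn

theorem IsDeletionSet.map_iso {W : Type*} {G : SimpleGraph V} {H : SimpleGraph W} (e : G ≃g H)
    {F : Set (Sym2 V)} (hF : IsDeletionSet G F) : IsDeletionSet H (Sym2.map e '' F) := by
  refine ⟨?_, ?_⟩
  · rintro _ ⟨z, hz, rfl⟩
    have hzG := hF.1 hz
    induction z with | _ a b => exact e.map_adj_iff.2 hzG
  · have key : ∀ a b, (H.deleteEdges (Sym2.map e '' F)).Adj a b ↔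
        (G.deleteEdges F).Adj (e.symm a) (e.symm b) := by
      intro a b
      obtain ⟨a, rfl⟩ := e.surjective a
      obtain ⟨b, rfl⟩ := e.surjective b
      have hmem : s(e a, e b) ∈ Sym2.map e '' F ↔ s(a, b) ∈ F := by
        rw [← Sym2.map_mk, (Sym2.map.injective e.injective).mem_set_image]
      simp [hmem, e.map_adj_iff]
    intro a b c d hP
    apply hF.2 (e.symm a) (e.symm b) (e.symm c) (e.symm d)
    simpa only [IsP4, key, ne_eq, e.symm.injective.eq_iff] using hP

theorem cographAlpha_le_of_iso {W : Type*} {G : SimpleGraph V} {H : SimpleGraph W} (e : G ≃g H) :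
    cographAlpha H ≤ cographAlpha G :=
  le_cographAlpha fun _ hF => (cographAlpha_le (hF.map_iso e)).trans_eq
    (Set.ncard_image_of_injective _ (Sym2.map.injective e.injective))

theorem cographAlpha_congr {W : Type*} {G : SimpleGraph V} {H : SimpleGraph W} (e : G ≃g H) :
    cographAlpha G = cographAlpha H :=
  (cographAlpha_le_of_iso e.symm).antisymm (cographAlpha_le_of_iso e)

/-- Deleting left-right edges so that the left neighbourhoods become nested. -/
theorem cographAlpha_splitGraph_le [Finite ι] {r r' : ι → ι → Prop} (hle : ∀ i j, r' i j → r i j)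
    (hr' : ∀ i j a b, r' i a → r' j b → r' i b ∨ r' j a) :
    cographAlpha (splitGraph r) ≤ {p : ι × ι | r p.1 p.2 ∧ ¬r' p.1 p.2}.ncard := by
  let f : ι × ι → Sym2 (ι ⊕ ι) := fun p => s(.inl p.1, .inr p.2)
  have hdel : (splitGraph r).deleteEdges (f '' {p | r p.1 p.2 ∧ ¬r' p.1 p.2}) = splitGraph r' := by
    ext (i | i) (j | j) <;> simp [f] <;> grind
  refine (cographAlpha_le ⟨?_, hdel ▸ isCograph_splitGraph hr'⟩).trans (Set.ncard_image_le)
  rintro _ ⟨p, hp, rfl⟩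
  exact hp.1

/-- A deletion set meets the edges of every induced `P4`. -/
theorem IsDeletionSet.exists_mem_of_isP4 {G : SimpleGraph V} {F : Set (Sym2 V)}
    (hF : IsDeletionSet G F) {a b c d : V} (hP : IsP4 G a b c d) :
    s(a, b) ∈ F ∨ s(b, c) ∈ F ∨ s(c, d) ∈ F := by
  have := hF.2 a b c d
  simp only [IsP4, deleteEdges_adj] at *
  tauto

theorem isP4_splitGraph_eq {i j : ι} (hij : i ≠ j) :
    IsP4 (splitGraph (· = ·)) (.inl i) (.inr i) (.inr j) (.inl j) := by
  simp [IsP4, hij, hij.symm]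

theorem isP4_splitGraph_ne {i j : ι} (hij : i ≠ j) :
    IsP4 (splitGraph (· ≠ ·)) (.inl i) (.inr j) (.inr i) (.inl j) := by
  simp [IsP4, hij, hij.symm]

theorem cographAlpha_splitGraph_eq [Finite ι] [Nonempty ι] :
    cographAlpha (splitGraph ((· = ·) : ι → ι → Prop)) = Nat.card ι - 1 := by
  classical
  cases nonempty_fintype ι
  have hcompl (i₀ : ι) : ({i₀}ᶜ : Set ι).ncard = Nat.card ι - 1 := by
    rw [Set.ncard_compl, Set.ncard_singleton]
  apply le_antisymm
  · obtain ⟨i₀⟩ := ‹Nonempty ι›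
    refine (cographAlpha_splitGraph_le (r' := fun i j => i = i₀ ∧ j = i₀) (by grind)
      (by grind)).trans ?_
    rw [← hcompl i₀]
    exact Set.ncard_le_ncard_of_injOn Prod.fst (by simp) (by rintro ⟨a, b⟩; simp; grind)
  · refine le_cographAlpha fun F hF => ?_
    refine le_trans ?_ (Set.ncard_image_le (f := Sym2.map (Sum.elim id id)) (s := F))
    set F' := Sym2.map (Sum.elim id id) '' F
    have hpair : ∀ i j, i ≠ j → s(i, i) ∈ F' ∨ s(i, j) ∈ F' ∨ s(j, j) ∈ F' := fun i j hij =>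
      (hF.exists_mem_of_isP4 (isP4_splitGraph_eq hij)).imp (fun h => ⟨_, h, rfl⟩)
        (Or.imp (fun h => ⟨_, h, rfl⟩) (fun h => ⟨_, h, rfl⟩))
    obtain ⟨i₀, h₀⟩ : ∃ i₀, ∀ j ≠ i₀, s(j, j) ∈ F' ∨ s(i₀, j) ∈ F' := by
      by_cases hall : ∀ i, s(i, i) ∈ F'
      · exact ⟨Classical.arbitrary ι, fun j _ => .inl (hall j)⟩
      · obtain ⟨i₀, hi₀⟩ := not_forall.1 hall
        exact ⟨i₀, fun j hj => ((hpair i₀ j hj.symm).resolve_left hi₀).symm⟩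
    rw [← hcompl i₀]
    refine Set.ncard_le_ncard_of_injOn (fun j => if s(j, j) ∈ F' then s(j, j) else s(i₀, j)) ?_ ?_
    · intro j hj
      have := h₀ j hj
      grind
    · intro i hi j hj h
      simp only [Set.mem_compl_iff, Set.mem_singleton_iff] at hi hj
      dsimp only at h
      split_ifs at h <;> simp at h <;> grind

theorem ncard_edgeSet_top [Finite ι] :
    (⊤ : SimpleGraph ι).edgeSet.ncard = Nat.card ι * (Nat.card ι - 1) / 2 := by
  classical
  cases nonempty_fintype ι
  rw [← coe_edgeFinset, Set.ncard_coe_finset, card_edgeFinset_top_eq_card_choose_two,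
    Nat.choose_two_right, Nat.card_eq_fintype_card]

theorem cographAlpha_splitGraph_ne [Finite ι] [LinearOrder ι] :
    cographAlpha (splitGraph ((· ≠ ·) : ι → ι → Prop)) = Nat.card ι * (Nat.card ι - 1) / 2 := by
  rw [← ncard_edgeSet_top]
  apply le_antisymm
  · refine (cographAlpha_splitGraph_le (r' := (· < ·)) (fun _ _ => ne_of_lt) ?_).trans ?_
    · intro i j a b hi hj
      rcases le_total a b with h | h
      · exact .inl (hi.trans_le h)
      · exact .inr (hj.trans_le h)
    · refine Set.ncard_le_ncard_of_injOn (fun p => s(p.1, p.2)) (fun p hp => hp.1) ?_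
      rintro ⟨a, b⟩ h ⟨c, d⟩ h'
      simp at *
      grind
  · refine le_cographAlpha fun F hF => ?_
    refine le_trans (Set.ncard_le_ncard ?_)
      (Set.ncard_image_le (f := Sym2.map (Sum.elim id id)) (s := F))
    rintro ⟨i, j⟩ hij
    rcases hF.exists_mem_of_isP4 (isP4_splitGraph_ne (i := i) (j := j) hij) with h | h | h
    · exact ⟨_, h, rfl⟩
    · exact ⟨_, h, Sym2.eq_swap⟩
    · exact ⟨_, h, rfl⟩

end SplitGraph

/-- The body of a graph with independent `S` and clique `K` is the split graph of its legs. -/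
theorem nonempty_iso_splitGraph {ι : Type*} {G : SimpleGraph V} {S K : Set V} (hdisj : Disjoint S K)
    (hS : ∀ u ∈ S, ∀ v ∈ S, u ≠ v → ¬G.Adj u v) (hK : ∀ u ∈ K, ∀ v ∈ K, u ≠ v → G.Adj u v)
    (f : ι ≃ S) (g : ι ≃ K) (r : ι → ι → Prop) (hr : ∀ i j, G.Adj (f i) (g j) ↔ r i j) :
    Nonempty (G.induce (S ∪ K) ≃g splitGraph r) := by
  classical
  let e : ι ⊕ ι ≃ (S ∪ K : Set V) := (Equiv.sumCongr f g).trans (Equiv.Set.union hdisj).symm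
  have hl (i : ι) : (e (.inl i) : V) = f i := by simp [e]
  have hrr (i : ι) : (e (.inr i) : V) = g i := by simp [e]
  refine ⟨RelIso.symm ⟨e, ?_⟩⟩
  rintro (i | i) (j | j) <;> simp only [comap_adj, Function.Embedding.subtype_apply, hl, hrr]
  · by_cases h : i = j
    · simp [h]
    · simpa using hS _ (f i).2 _ (f j).2 fun hij => h (f.injective (Subtype.ext hij))
  · exact hr i j
  · rw [G.adj_comm]
    exact hr j i
  · refine ⟨fun h hij => G.irrefl (hij ▸ h), fun h => hK _ (g i).2 _ (g j).2 fun hij => h ?_⟩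
    exact g.injective (Subtype.ext hij)

/-- If `G` is a spider with vertex partition `S, K, R`, then
`α(G[S ∪ K])` equals either `|K| - 1` or `|K|(|K| - 1)/2`. -/
theorem cographAlpha_spider_body (G : SimpleGraph V)
    (S K R : Set V) (hSKR : IsSpiderPartition G S K R) :
    cographAlpha (G.induce (S ∪ K)) = K.ncard - 1 ∨
    cographAlpha (G.induce (S ∪ K)) = K.ncard * (K.ncard - 1) / 2 := by
  obtain ⟨-, hdisj, -, -, -, hcard, hS, hK, -, -, φ, hφ⟩ := hSKR
  have hfin : Finite K := Set.finite_of_ncard_ne_zero (by omega)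
  have : NeZero K.ncard := ⟨by omega⟩
  let g : Fin K.ncard ≃ K := (Finite.equivFinOfCardEq (Nat.card_coe_set_eq K)).symm
  have hadj (i j : Fin K.ncard) :
      G.Adj (φ.symm (g i)) (g j) ↔ (g j : V) ∈ G.neighborSet (φ.symm (g i)) ∩ K := by simp
  rcases hφ with hφ | hφ
  · left
    obtain ⟨e⟩ := nonempty_iso_splitGraph hdisj hS hK (g.trans φ.symm) g (· = ·) fun i j => by
      simp only [Equiv.trans_apply]
      rw [hadj, hφ]
      simp [Subtype.coe_inj, eq_comm]
    rw [cographAlpha_congr e, cographAlpha_splitGraph_eq, Nat.card_fin]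
  · right
    obtain ⟨e⟩ := nonempty_iso_splitGraph hdisj hS hK (g.trans φ.symm) g (· ≠ ·) fun i j => by
      simp only [Equiv.trans_apply]
      rw [hadj, hφ]
      simp [Subtype.coe_inj, eq_comm]
    rw [cographAlpha_congr e, cographAlpha_splitGraph_ne, Nat.card_fin]
end

section
/- Let G be a P4-sparse graph and let A be a set of four vertices inducing a P4 in G. Then there do not exist a vertex v in P(A) and distinct vertices x, y in T(A) such that v is adjacent to neither x nor y. -/
open SimpleGraph

variable {V : Type*}

/-- `T(A)`: the vertices outside `A` adjacent to all vertices of `A`. -/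
def tSet (G : SimpleGraph V) (A : Set V) : Set V :=
  {v | v ∉ A ∧ ∀ a ∈ A, G.Adj v a}

/-- `I(A)`: the vertices outside `A` adjacent to no vertex of `A`. -/
def iSet (G : SimpleGraph V) (A : Set V) : Set V :=
  {v | v ∉ A ∧ ∀ a ∈ A, ¬G.Adj v a}

/-- `P(A)`: the vertices `v` outside `A` with `1 ≤ |N(v) ∩ A| ≤ 3`. -/
def pSet (G : SimpleGraph V) (A : Set V) : Set V :=
  {v | v ∉ A ∧ 1 ≤ (G.neighborSet v ∩ A).ncard ∧ (G.neighborSet v ∩ A).ncard ≤ 3}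

/-- In a `P4`-sparse graph, adding a vertex `v` to an induced `P4` creates no further `P4`. -/
theorem P4Sparse.eq_of_subset_insert {G : SimpleGraph V} (hG : P4Sparse G) {a b c d v : V}
    (hP4 : IsP4 G a b c d) (hv : v ∉ ({a, b, c, d} : Set V)) {B : Set V}
    (hB : InducesP4 G B) (hBs : B ⊆ insert v {a, b, c, d}) : B = {a, b, c, d} := by
  refine hG (insert v {a, b, c, d}) ?_ B _ hBs (Set.subset_insert _ _) hB ⟨a, b, c, d, hP4, rfl⟩
  obtain ⟨hab, hac, had, hbc, hbd, hcd, -⟩ := hP4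
  rw [Set.ncard_insert_of_notMem hv, Set.ncard_insert_of_notMem (by simp [hab, hac, had]),
    Set.ncard_insert_of_notMem (by simp [hbc, hbd]), Set.ncard_pair hcd]

/-- In a `P4`-sparse graph, an induced `P4` inside `{v, a, b, c, d}` avoids `v`. -/
theorem P4Sparse.notMem_of_isP4 {G : SimpleGraph V} (hG : P4Sparse G) {a b c d v : V}
    (hP4 : IsP4 G a b c d) (hv : v ∉ ({a, b, c, d} : Set V)) {p q r s : V}
    (h : IsP4 G p q r s) (hs : ({p, q, r, s} : Set V) ⊆ insert v {a, b, c, d}) :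
    v ∉ ({p, q, r, s} : Set V) := by
  rwa [hG.eq_of_subset_insert hP4 hv ⟨p, q, r, s, h, rfl⟩ hs]

/-- In a `P4`-sparse graph, a vertex of `P(A)` is adjacent exactly to the two midpoints of `A`. -/
theorem P4Sparse.adj_of_mem_pSet {G : SimpleGraph V} (hG : P4Sparse G) {a b c d v : V}
    (hP4 : IsP4 G a b c d) (hv : v ∈ pSet G {a, b, c, d}) :
    ¬G.Adj v a ∧ G.Adj v b ∧ G.Adj v c ∧ ¬G.Adj v d := by
  obtain ⟨hvA, hpos, hle⟩ := hv
  have hsome : G.Adj v a ∨ G.Adj v b ∨ G.Adj v c ∨ G.Adj v d := by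
    obtain ⟨w, hw, hwA⟩ := Set.nonempty_of_ncard_ne_zero (Nat.one_le_iff_ne_zero.mp hpos)
    simp only [Set.mem_insert_iff, Set.mem_singleton_iff, mem_neighborSet] at hw hwA
    grind
  have hnotall : ¬(G.Adj v a ∧ G.Adj v b ∧ G.Adj v c ∧ G.Adj v d) := by
    rintro ⟨h1, h2, h3, h4⟩
    have hsub : ({a, b, c, d} : Set V) ⊆ G.neighborSet v := by
      simp [Set.insert_subset_iff, h1, h2, h3, h4]
    obtain ⟨hab, hac, had, hbc, hbd, hcd, -⟩ := hP4
    rw [Set.inter_eq_right.mpr hsub, Set.ncard_insert_of_notMem (by simp [hab, hac, had]),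
      Set.ncard_insert_of_notMem (by simp [hbc, hbd]), Set.ncard_pair hcd] at hle
    omega
  have key (p q r s : V) (h : IsP4 G p q r s) := hG.notMem_of_isP4 hP4 hvA h
  simp only [Set.insert_subset_iff, Set.singleton_subset_iff, Set.mem_insert_iff,
    Set.mem_singleton_iff, not_or] at key hvA
  have k1 := key v a b c
  have k2 := key v b c d
  have k3 := key v c b a
  have k4 := key v d c b
  have k5 := key a v c d
  have k6 := key d v b a
  have k7 := key a v d c
  have k8 := key d v a b
  simp only [IsP4, G.adj_comm _ v] at k1 k2 k3 k4 k5 k6 k7 k8 hP4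
  have hba := G.adj_comm b a
  have hca := G.adj_comm c a
  have hda := G.adj_comm d a
  have hcb := G.adj_comm c b
  have hdb := G.adj_comm d b
  have hdc := G.adj_comm d c
  clear key hpos hle hG
  by_cases h1 : G.Adj v a <;> by_cases h2 : G.Adj v b <;> by_cases h3 : G.Adj v c <;>
    by_cases h4 : G.Adj v d <;> grind

/-- **Observation 2.6.** If `G` is `P4`-sparse and `A` induces a `P4`, then
there are no `v ∈ P(A)` and distinct `x, y ∈ T(A)` such that `v` is adjacent to neither `x`
nor `y`. -/
theorem p4Sparse_obs_2_6 (G : SimpleGraph V) (hG : P4Sparse G)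
    (a b c d : V) (hP4 : IsP4 G a b c d) (A : Set V) (hA : A = {a, b, c, d}) :
    ¬∃ v x y : V, x ≠ y ∧ v ∈ pSet G A ∧ x ∈ tSet G A ∧ y ∈ tSet G A ∧
      ¬G.Adj v x ∧ ¬G.Adj v y := by
  rintro ⟨v, x, y, hxy, hv, ⟨hxA, hx⟩, ⟨hyA, hy⟩, hvx, hvy⟩
  subst hA
  obtain ⟨-, hvb, -, hvd⟩ := hG.adj_of_mem_pSet hP4 hv
  have hvA := hv.1
  obtain ⟨-, -, -, -, hbd, -, -, -, -, -, -, hnbd⟩ := hP4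
  have hP (z : V) (hzA : z ∉ ({a, b, c, d} : Set V))
      (hz : ∀ w ∈ ({a, b, c, d} : Set V), G.Adj z w) (hvz : ¬G.Adj v z) : IsP4 G v b z d := by
    have hzb := hz b (by simp)
    have hzd := hz d (by simp)
    exact ⟨hvb.ne, fun h => hvd (h ▸ hzd), fun h => hvA (by simp [h]), hzb.ne', hbd, hzd.ne,
      hvb, hzb.symm, hzd, hvz, hvd, hnbd⟩
  have hX := hP x hxA hx hvx
  have hY := hP y hyA hy hvy
  have hynot : y ∉ ({v, b, x, d} : Set V) := by
    simp [hxy.symm, hY.2.1.symm, hY.2.2.2.1.symm, hY.2.2.2.2.2.1]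
  refine hG.notMem_of_isP4 hX hynot hY ?_ (by simp)
  simp [Set.insert_subset_iff]
end

section
/- Let G be a P4-sparse graph and let A be a set of four vertices inducing a P4 in G. Then there do not exist distinct vertices u, v in P(A) and a vertex x in I(A) such that x is adjacent to both u and v. -/
open SimpleGraph

variable {V : Type*}

/-- In a `P4`-sparse graph, adding a vertex `u` to an induced `P4` creates no further `P4`. -/
theorem P4Sparse.not_isP4_of_mem {G : SimpleGraph V} (hG : P4Sparse G) {a b c d u : V}
    (h : IsP4 G a b c d) (hu : u ∉ ({a, b, c, d} : Set V)) {p q r s : V}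
    (hsub : ({p, q, r, s} : Set V) ⊆ {u, a, b, c, d}) (hmem : u ∈ ({p, q, r, s} : Set V)) :
    ¬IsP4 G p q r s := by
  intro h'
  have hcard : ({u, a, b, c, d} : Set V).ncard = 5 := by
    obtain ⟨hab, hac, had, hbc, hbd, hcd, -⟩ := h
    have hd : ({a, b, c, d} : Set V).ncard = 4 := by
      rw [Set.ncard_insert_of_notMem (by simp [hab, hac, had]),
        Set.ncard_insert_of_notMem (by simp [hbc, hbd]), Set.ncard_pair hcd]
    rw [Set.ncard_insert_of_notMem hu, hd]
  have heq := hG _ hcard {a, b, c, d} {p, q, r, s} (Set.subset_insert _ _) hsub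
    ⟨a, b, c, d, h, rfl⟩ ⟨p, q, r, s, h', rfl⟩
  exact hu (heq ▸ hmem)

/-- In a `P4`-sparse graph, a vertex that is partially adjacent to an induced `P4` is adjacent
to exactly its two midpoints. -/
theorem P4Sparse.adj_midpoints {G : SimpleGraph V} (hG : P4Sparse G) {a b c d u : V}
    (h : IsP4 G a b c d) (hu : u ∉ ({a, b, c, d} : Set V))
    (hadj : G.Adj u a ∨ G.Adj u b ∨ G.Adj u c ∨ G.Adj u d)
    (hnadj : ¬(G.Adj u a ∧ G.Adj u b ∧ G.Adj u c ∧ G.Adj u d)) :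
    ¬G.Adj u a ∧ G.Adj u b ∧ G.Adj u c ∧ ¬G.Adj u d := by
  have hno := fun p q r s => hG.not_isP4_of_mem h hu (p := p) (q := q) (r := r) (s := s)
  have hubcd := hno u b c d (by grind) (by simp)
  have huabc := hno u a b c (by grind) (by simp)
  have habcu := hno a b c u (by grind) (by simp)
  have hbcdu := hno b c d u (by grind) (by simp)
  have haucd := hno a u c d (by grind) (by simp)
  have habud := hno a b u d (by grind) (by simp)
  have hbaud := hno b a u d (by grind) (by simp)
  have haudc := hno a u d c (by grind) (by simp)
  clear hno
  simp only [Set.mem_insert_iff, Set.mem_singleton_iff, not_or] at hu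
  simp only [IsP4, G.adj_comm _ u] at *
  grind [SimpleGraph.adj_comm]

/-- In a `P4`-sparse graph, the vertices of `P(A)` are adjacent to exactly the midpoints of `A`. -/
theorem P4Sparse.adj_midpoints_of_mem_pSet {G : SimpleGraph V} (hG : P4Sparse G) {a b c d u : V}
    (h : IsP4 G a b c d) (hu : u ∈ pSet G {a, b, c, d}) :
    ¬G.Adj u a ∧ G.Adj u b ∧ G.Adj u c ∧ ¬G.Adj u d := by
  obtain ⟨hmem, hpos, hle⟩ := hu
  refine hG.adj_midpoints h hmem ?_ ?_
  · obtain ⟨y, hy, hyA⟩ := Set.nonempty_of_ncard_ne_zero (Nat.ne_of_gt hpos)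
    rw [SimpleGraph.mem_neighborSet] at hy
    rcases hyA with rfl | rfl | rfl | rfl <;> simp [hy]
  · rintro ⟨ha, hb, hc, hd⟩
    have hsub : ({a, b, c, d} : Set V) ⊆ G.neighborSet u := by
      rintro y (rfl | rfl | rfl | rfl) <;> assumption
    obtain ⟨hab, hac, had, hbc, hbd, hcd, -⟩ := h
    rw [Set.inter_eq_right.mpr hsub, Set.ncard_insert_of_notMem (by simp [hab, hac, had]),
      Set.ncard_insert_of_notMem (by simp [hbc, hbd]), Set.ncard_pair hcd] at hle
    omega

/-- **Observation 2.7, complement form.** If `G` is `P4`-sparse and `A`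
induces a `P4`, then there are no distinct `u, v ∈ P(A)` and `x ∈ I(A)` such that `x` is
adjacent to both `u` and `v`. -/
theorem p4Sparse_obs_2_7_compl (G : SimpleGraph V) (hG : P4Sparse G)
    (a b c d : V) (hP4 : IsP4 G a b c d) (A : Set V) (hA : A = {a, b, c, d}) :
    ¬∃ u v x : V, u ≠ v ∧ u ∈ pSet G A ∧ v ∈ pSet G A ∧ x ∈ iSet G A ∧
      G.Adj x u ∧ G.Adj x v := by
  subst hA
  rintro ⟨u, v, x, huv, hu, hv, ⟨hxA, hx⟩, hxu, hxv⟩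
  obtain ⟨hua, hub, -, -⟩ := hG.adj_midpoints_of_mem_pSet hP4 hu
  obtain ⟨hva, hvb, -, -⟩ := hG.adj_midpoints_of_mem_pSet hP4 hv
  have huA := hu.1
  have hvA := hv.1
  have hxa := hx a (by simp)
  have hxb := hx b (by simp)
  simp only [Set.mem_insert_iff, Set.mem_singleton_iff, not_or] at huA hvA hxA
  have habux : IsP4 G a b u x :=
    ⟨hP4.1, Ne.symm huA.1, Ne.symm hxA.1, Ne.symm huA.2.1, Ne.symm hxA.2.1, hxu.ne',
      hP4.2.2.2.2.2.2.1, hub.symm, hxu.symm, fun h => hua h.symm, fun h => hxa h.symm,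
      fun h => hxb h.symm⟩
  have hmid := hG.adj_midpoints habux (u := v)
    (by simp [hvA.1, hvA.2.1, huv.symm, hxv.ne']) (Or.inr (Or.inl hvb)) (fun h => hva h.1)
  exact hmid.2.2.2 hxv.symm
end
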